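/- Leftover hash lemma: Let 𝒳, 𝒵 be countable sets and 𝒱, 𝒦 finite sets. Let ℱ be a finite 2-universal family of maps f : 𝒳 → 𝒦, i.e., (1/|ℱ|)·Σ_{f∈ℱ} 1{f(x) = f(x′)} ≤ 1/|𝒦| for all x ≠ x′. Let (X,V,Z) have joint pmf P_{XVZ}, and let S be uniformly distributed on ℱ, independent of (X,V,Z); set K = S(X) (the map S applied to X). Then for every pmf Q_Z on 𝒵 with supp(P_Z) ⊆ supp(Q_Z): d(P_{KVZS}, P_unif × P_{VZ} × P_S) ≤ (1/2)·√( |𝒦|·|𝒱|·2^{−H_min(P_{XZ}|Q_Z)} ), where H_min(P_{XZ}|Q_Z) = −log sup_{x,z : Q_Z(z)>0} P_{XZ}(x,z)/Q_Z(z). -/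

import Mathlib

open scoped BigOperators

noncomputable section

attribute [local instance] Classical.propDecidable

/-- Probability of a set under a pmf. -/
def probOf {α : Type*} (P : α → ℝ) (S : Set α) : ℝ := ∑' a : S, P a

/-- `P` is a probability mass function. -/
def IsPMF {α : Type*} (P : α → ℝ) : Prop := (∀ a, 0 ≤ P a) ∧ ∑' a, P a = 1

/-- Variational distance between two pmfs. -/
def tvDist {α : Type*} (P Q : α → ℝ) : ℝ := (1 / 2) * ∑' a, |P a - Q a|

theorem hash_sq {X K F : Type*} [Fintype K] [Fintype F] [Nonempty F]
    (fam : F → X → K)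
    (h2u : ∀ x x' : X, x ≠ x' →
      ((Finset.univ.filter fun f : F => fam f x = fam f x').card : ℝ) / (Fintype.card F : ℝ)
        ≤ 1 / (Fintype.card K : ℝ))
    (p : X → ℝ) (hp : ∀ x, 0 ≤ p x) (hs : Summable p) (M : ℝ) (hM : ∀ x, p x ≤ M) :
    ∑ f : F, ∑ k : K, (∑' x, if fam f x = k then p x else 0) ^ 2
      ≤ (Fintype.card F : ℝ) * ((Fintype.card K : ℝ)⁻¹ * (∑' x, p x) ^ 2 + M * ∑' x, p x) := by
  have hF : (0 : ℝ) < Fintype.card F := by exact_mod_cast Fintype.card_pos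
  have hsi : ∀ f k, Summable fun x => if fam f x = k then p x else 0 := by
    intro f k
    refine Summable.of_nonneg_of_le (fun x => ?_) (fun x => ?_) hs
    · split_ifs <;> simp [hp]
    · split_ifs <;> simp [hp]
  set A : F → K → ℝ := fun f k => ∑' x, if fam f x = k then p x else 0 with hA
  have hAle : ∀ f k, A f k ≤ ∑' x, p x := by
    intro f k
    refine (hsi f k).tsum_le_tsum (fun x => ?_) hs
    split_ifs <;> simp [hp]
  have hA0 : ∀ f k, 0 ≤ A f k := fun f k => tsum_nonneg fun x => by split_ifs <;> simp [hp]
  have h1 : ∀ f, ∑ k, A f k ^ 2 = ∑' x, p x * A f (fam f x) := by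
    intro f
    have : ∀ k, A f k ^ 2 = ∑' x, (if fam f x = k then p x else 0) * A f k := by
      intro k
      rw [tsum_mul_right, sq]
    simp_rw [this]
    rw [← Summable.tsum_finsetSum (fun k _ => (hsi f k).mul_right _)]
    refine tsum_congr fun x => ?_
    simp [ite_mul]
  have hs1 : ∀ f, Summable fun x => p x * A f (fam f x) := fun f =>
    Summable.of_nonneg_of_le (fun x => mul_nonneg (hp x) (hA0 _ _))
      (fun x => mul_le_mul_of_nonneg_left (hAle _ _) (hp x)) (hs.mul_right _)
  have h2 : ∀ x, ∑ f, A f (fam f x)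
      ≤ (Fintype.card F : ℝ) * ((Fintype.card K : ℝ)⁻¹ * (∑' x, p x) + M) := by
    intro x
    simp only [hA]
    rw [← Summable.tsum_finsetSum (fun f _ => hsi f _)]
    have hsx : Summable fun y => if y = x then p y else 0 :=
      summable_of_ne_finset_zero (s := {x}) (by intro b hb; simp at hb; simp [hb])
    have hle : ∀ y, (∑ f, if fam f y = fam f x then p y else 0) ≤
        (Fintype.card F : ℝ) * ((Fintype.card K : ℝ)⁻¹ * p y + if y = x then p y else 0) := by
      intro y
      by_cases h : y = x
      · subst h
        simp only [if_true, Finset.sum_const, Finset.card_univ, nsmul_eq_mul]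
        have : 0 ≤ (Fintype.card K : ℝ)⁻¹ * p y := mul_nonneg (by positivity) (hp y)
        exact mul_le_mul_of_nonneg_left (by linarith) hF.le
      · rw [← Finset.sum_filter, Finset.sum_const, nsmul_eq_mul, if_neg h, add_zero, ← mul_assoc]
        have := h2u y x h
        rw [div_le_iff₀ hF, one_div, mul_comm] at this
        exact mul_le_mul_of_nonneg_right this (hp y)
    have hsr := ((hs.mul_left ((Fintype.card K : ℝ)⁻¹)).add hsx)
    refine (Summable.tsum_le_tsum hle (summable_sum fun f _ => hsi f _) (hsr.mul_left _)).trans ?_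
    rw [tsum_mul_left, (hs.mul_left _).tsum_add hsx, tsum_mul_left, tsum_ite_eq]
    have := hM x
    gcongr
  calc ∑ f, ∑ k, A f k ^ 2 = ∑' x, p x * ∑ f, A f (fam f x) := by
        simp_rw [h1, Finset.mul_sum]
        rw [Summable.tsum_finsetSum (fun f _ => hs1 f)]
    _ ≤ ∑' x, p x * ((Fintype.card F : ℝ) * ((Fintype.card K : ℝ)⁻¹ * (∑' x, p x) + M)) := by
        refine Summable.tsum_le_tsum (fun x => mul_le_mul_of_nonneg_left (h2 x) (hp x)) ?_
          (hs.mul_right _)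
        simp_rw [Finset.mul_sum]
        exact summable_sum fun f _ => hs1 f
    _ = _ := by rw [tsum_mul_right]; ring

theorem hash_key {X K F : Type*} [Fintype K] [Nonempty K] [Fintype F] [Nonempty F]
    (fam : F → X → K)
    (h2u : ∀ x x' : X, x ≠ x' →
      ((Finset.univ.filter fun f : F => fam f x = fam f x').card : ℝ) / (Fintype.card F : ℝ)
        ≤ 1 / (Fintype.card K : ℝ))
    (p : X → ℝ) (hp : ∀ x, 0 ≤ p x) (hs : Summable p) (M : ℝ) (hM : ∀ x, p x ≤ M) :
    ∑ f : F, ∑ k : K, |(Fintype.card F : ℝ)⁻¹ * (∑' x, if fam f x = k then p x else 0)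
        - (Fintype.card K : ℝ)⁻¹ * (∑' x, p x) * (Fintype.card F : ℝ)⁻¹|
      ≤ √((Fintype.card K : ℝ) * (M * ∑' x, p x)) := by
  have hF : (0 : ℝ) < Fintype.card F := by exact_mod_cast Fintype.card_pos
  have hK : (0 : ℝ) < Fintype.card K := by exact_mod_cast Fintype.card_pos
  have hsq := hash_sq fam h2u p hp hs M hM
  have hsi : ∀ f k, Summable fun x => if fam f x = k then p x else 0 := by
    intro f k
    refine Summable.of_nonneg_of_le (fun x => ?_) (fun x => ?_) hs
    · split_ifs <;> simp [hp]
    · split_ifs <;> simp [hp]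
  have hsum : ∀ f, ∑ k, (∑' x, if fam f x = k then p x else 0) = ∑' x, p x := by
    intro f
    rw [← Summable.tsum_finsetSum (fun k _ => hsi f k)]
    simp
  set A : F → K → ℝ := fun f k => ∑' x, if fam f x = k then p x else 0 with hA
  set q := ∑' x, p x
  change ∑ f, ∑ k, A f k ^ 2 ≤ _ at hsq
  change ∀ f, ∑ k, A f k = q at hsum
  change ∑ f, ∑ k, |(Fintype.card F : ℝ)⁻¹ * A f k - _| ≤ _
  apply Real.le_sqrt_of_sq_le
  have hvar : ∑ f, ∑ k, (A f k - (Fintype.card K : ℝ)⁻¹ * q) ^ 2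
      = (∑ f, ∑ k, A f k ^ 2) - Fintype.card F * ((Fintype.card K : ℝ)⁻¹ * q ^ 2) := by
    have : ∀ f, ∑ k, (A f k - (Fintype.card K : ℝ)⁻¹ * q) ^ 2
        = (∑ k, A f k ^ 2) - (Fintype.card K : ℝ)⁻¹ * q ^ 2 := by
      intro f
      simp_rw [sub_sq, Finset.sum_add_distrib, Finset.sum_sub_distrib, mul_assoc,
        ← Finset.mul_sum, ← Finset.sum_mul, hsum]
      simp only [Finset.sum_const, Finset.card_univ, nsmul_eq_mul]
      field_simp
      ring
    simp_rw [this, Finset.sum_sub_distrib]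
    simp
  rw [← Fintype.sum_prod_type' (f := fun f k => |(Fintype.card F : ℝ)⁻¹ * A f k
    - (Fintype.card K : ℝ)⁻¹ * q * (Fintype.card F : ℝ)⁻¹|)]
  refine sq_sum_le_card_mul_sum_sq.trans ?_
  simp only [sq_abs]
  rw [Fintype.sum_prod_type (f := fun i : F × K => ((Fintype.card F : ℝ)⁻¹ * A i.1 i.2
    - (Fintype.card K : ℝ)⁻¹ * q * (Fintype.card F : ℝ)⁻¹) ^ 2)]
  have : ∀ f k, ((Fintype.card F : ℝ)⁻¹ * A f k
    - (Fintype.card K : ℝ)⁻¹ * q * (Fintype.card F : ℝ)⁻¹) ^ 2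
      = ((Fintype.card F : ℝ)⁻¹) ^ 2 * (A f k - (Fintype.card K : ℝ)⁻¹ * q) ^ 2 := by
    intros; ring
  simp_rw [this, ← Finset.mul_sum]
  rw [hvar, Finset.card_univ, Fintype.card_prod]
  push_cast
  calc _ ≤ (Fintype.card F : ℝ) * (Fintype.card K : ℝ) * (((Fintype.card F : ℝ)⁻¹) ^ 2 *
        ((Fintype.card F : ℝ) * (M * q))) := by
        gcongr
        linarith
    _ = _ := by field_simp

/-- the leftover hash lemma. Here `c` plays the role of the
conditional min-entropy `H_min(P_XZ | Q_Z)`: the hypothesis `hc` says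
`P_XZ(x,z) ≤ 2^{-c}·Q_Z(z)` on `{Q_Z > 0}`, i.e. `H_min(P_XZ|Q_Z) ≥ c`,
which holds in particular for `c = H_min(P_XZ|Q_Z) = −log sup P_XZ/Q_Z`.
The joint pmf of `(K, V, Z, S)` is `P_unif(s') · Σ_x 1{f_{s'}(x)=k}·P_XVZ(x,v,z)`
(the seed `S` is uniform on the family `F` and independent of `(X,V,Z)`, and
`K = f_S(X)`). -/
theorem leftover_hash
    {X Z : Type*} [Countable X] [Countable Z]
    (V K F : Type) [Fintype V] [Fintype K] [Fintype F] [Nonempty F]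
    (fam : F → X → K)
    -- 2-universality of the family
    (h2u : ∀ x x' : X, x ≠ x' →
      ((Finset.univ.filter fun f : F => fam f x = fam f x').card : ℝ) / (Fintype.card F : ℝ)
        ≤ 1 / (Fintype.card K : ℝ))
    (P : X × V × Z → ℝ) (hP : IsPMF P)
    (QZ : Z → ℝ) (hQZ : IsPMF QZ)
    -- supp(P_Z) ⊆ supp(Q_Z)
    (hsupp : ∀ z, QZ z = 0 → (∑' (x : X) (v : V), P (x, v, z)) = 0)
    (c : ℝ)
    -- H_min(P_XZ | Q_Z) ≥ c
    (hc : ∀ x z, 0 < QZ z → (∑' v : V, P (x, v, z)) ≤ (2 : ℝ) ^ (-c) * QZ z) :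
    tvDist
      -- P_{KVZS}
      (fun w : K × V × Z × F => (Fintype.card F : ℝ)⁻¹ *
        ∑' x : X, if fam w.2.2.2 x = w.1 then P (x, w.2.1, w.2.2.1) else 0)
      -- P_unif × P_{VZ} × P_S
      (fun w : K × V × Z × F => (Fintype.card K : ℝ)⁻¹ *
        (∑' x : X, P (x, w.2.1, w.2.2.1)) * (Fintype.card F : ℝ)⁻¹)
      ≤ (1 / 2) * Real.sqrt
          ((Fintype.card K : ℝ) * (Fintype.card V : ℝ) * (2 : ℝ) ^ (-c)) := by
  have hPs : Summable P := by
    by_contra h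
    have := hP.2
    rw [tsum_eq_zero_of_not_summable h] at this
    exact zero_ne_one this
  have hQs : Summable QZ := by
    by_contra h
    have := hQZ.2
    rw [tsum_eq_zero_of_not_summable h] at this
    exact zero_ne_one this
  have hne : Nonempty (X × V × Z) := by
    by_contra h
    rw [not_nonempty_iff] at h
    have := hP.2
    simp at this
  obtain ⟨x₀, v₀, z₀⟩ := hne
  obtain ⟨f₀⟩ := ‹Nonempty F›
  haveI : Nonempty K := ⟨fam f₀ x₀⟩
  haveI : Nonempty F := ⟨f₀⟩
  haveI : Nonempty V := ⟨v₀⟩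
  have hV : (0 : ℝ) < Fintype.card V := by exact_mod_cast Fintype.card_pos
  have hps : ∀ v z, Summable fun x => P (x, v, z) := by
    intro v z
    exact hPs.comp_injective (i := fun x => (x, v, z)) (fun a b h => by simpa using h)
  have hM : ∀ v z x, P (x, v, z) ≤ (2 : ℝ) ^ (-c) * QZ z := by
    intro v z x
    have hle : P (x, v, z) ≤ ∑ v, P (x, v, z) :=
      Finset.single_le_sum (f := fun v => P (x, v, z)) (fun v _ => hP.1 _) (Finset.mem_univ v)
    rcases (hQZ.1 z).lt_or_eq with h | h
    · have := hc x z h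
      rw [tsum_fintype] at this
      exact hle.trans this
    · have h0 := hsupp z h.symm
      simp_rw [tsum_fintype] at h0
      have hs : Summable fun x => ∑ v, P (x, v, z) := summable_sum fun v _ => hps v z
      have := hs.le_tsum x (fun y _ => Finset.sum_nonneg fun v _ => hP.1 _)
      rw [← h, mul_zero]
      linarith
  have hq0 : ∀ v z, 0 ≤ ∑' x, P (x, v, z) := fun v z => tsum_nonneg fun x => hP.1 _
  set B : ℝ := (Fintype.card K : ℝ) * (2 : ℝ) ^ (-c) with hB
  have hB0 : 0 ≤ B := by positivity
  set r : ℝ := √(Fintype.card V : ℝ) with hr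
  have hr0 : 0 < r := Real.sqrt_pos.2 hV
  have hrr : r * r = Fintype.card V := Real.mul_self_sqrt hV.le
  have hkey : ∀ v z, ∑ f : F, ∑ k : K,
      |(Fintype.card F : ℝ)⁻¹ * (∑' x, if fam f x = k then P (x, v, z) else 0)
        - (Fintype.card K : ℝ)⁻¹ * (∑' x, P (x, v, z)) * (Fintype.card F : ℝ)⁻¹|
      ≤ √B * ((QZ z / r + r * ∑' x, P (x, v, z)) / 2) := by
    intro v z
    refine (hash_key fam h2u (fun x => P (x, v, z)) (fun x => hP.1 _) (hps v z) _
      (hM v z)).trans ?_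
    have hq := hq0 v z
    have hQ := hQZ.1 z
    set q := ∑' x, P (x, v, z)
    rw [show (Fintype.card K : ℝ) * ((2 : ℝ) ^ (-c) * QZ z * q) = B * (QZ z * q) by
      rw [hB]; ring, Real.sqrt_mul hB0]
    refine mul_le_mul_of_nonneg_left ?_ (Real.sqrt_nonneg _)
    rw [Real.sqrt_le_left (by positivity)]
    have h1 : QZ z * q = (QZ z / r) * (r * q) := by field_simp
    rw [h1]
    nlinarith [sq_nonneg (QZ z / r - r * q)]
  unfold tvDist
  refine mul_le_mul_of_nonneg_left ?_ (by norm_num)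
  rw [show (Fintype.card K : ℝ) * (Fintype.card V : ℝ) * (2 : ℝ) ^ (-c)
    = B * Fintype.card V by rw [hB]; ring, Real.sqrt_mul hB0, ← hr]
  refine Real.tsum_le_of_sum_le (fun _ => abs_nonneg _) fun s => ?_
  set T : Finset Z := s.image (fun w => w.2.2.1) with hT
  have hsub : s ⊆ (Finset.univ : Finset K) ×ˢ (Finset.univ : Finset V) ×ˢ T ×ˢ
      (Finset.univ : Finset F) := by
    intro w hw
    simp only [Finset.mem_product, Finset.mem_univ, true_and, and_true]
    exact Finset.mem_image_of_mem _ hw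
  refine (Finset.sum_le_sum_of_subset_of_nonneg hsub fun _ _ _ => abs_nonneg _).trans ?_
  have hPsum : ∑ v, ∑ z ∈ T, ∑' x, P (x, v, z) ≤ 1 := by
    have hs2 : Summable fun w : (V × Z) × X => P (w.2, w.1.1, w.1.2) :=
      hPs.comp_injective (i := fun w : (V × Z) × X => (w.2, w.1.1, w.1.2)) (by
        rintro ⟨⟨a, b⟩, d⟩ ⟨⟨a', b'⟩, d'⟩ h
        simp at h ⊢
        tauto)
    have he : ∑' w : (V × Z) × X, P (w.2, w.1.1, w.1.2) = 1 := by
      rw [← hP.2]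
      let e : (V × Z) × X ≃ X × V × Z := Equiv.prodComm _ _
      exact e.tsum_eq P
    rw [hs2.tsum_prod] at he
    rw [← Finset.sum_product' (f := fun v z => ∑' x, P (x, v, z)), ← he]
    exact hs2.prod.sum_le_tsum _ (fun i _ => hq0 i.1 i.2)
  have hQsum : ∑ z ∈ T, QZ z ≤ 1 := by
    rw [← hQZ.2]
    exact hQs.sum_le_tsum _ (fun i _ => hQZ.1 i)
  calc _ = ∑ v, ∑ z ∈ T, ∑ f : F, ∑ k : K,
      |(Fintype.card F : ℝ)⁻¹ * (∑' x, if fam f x = k then P (x, v, z) else 0)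
        - (Fintype.card K : ℝ)⁻¹ * (∑' x, P (x, v, z)) * (Fintype.card F : ℝ)⁻¹| := by
        rw [Finset.sum_product_right, Finset.sum_product]
        refine Finset.sum_congr rfl fun v _ => ?_
        rw [Finset.sum_product]
    _ ≤ ∑ v, ∑ z ∈ T, √B * ((QZ z / r + r * ∑' x, P (x, v, z)) / 2) :=
        Finset.sum_le_sum fun v _ => Finset.sum_le_sum fun z _ => hkey v z
    _ = √B * (((Fintype.card V : ℝ) * (∑ z ∈ T, QZ z) / r
          + r * ∑ v, ∑ z ∈ T, ∑' x, P (x, v, z)) / 2) := by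
        simp_rw [← Finset.mul_sum, ← Finset.sum_div, Finset.sum_add_distrib, ← Finset.mul_sum,
          ← Finset.sum_div]
        rw [Finset.sum_const, Finset.card_univ, nsmul_eq_mul, mul_div_assoc]
    _ ≤ √B * r := by
        refine mul_le_mul_of_nonneg_left ?_ (Real.sqrt_nonneg _)
        rw [← hrr, show r * r * (∑ z ∈ T, QZ z) / r = r * ∑ z ∈ T, QZ z by field_simp]
        nlinarith [mul_le_mul_of_nonneg_left hQsum hr0.le,
          mul_le_mul_of_nonneg_left hPsum hr0.le]
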